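/- For all n ≥ 0 and J ∈ P_n with runs J_1, …, J_t: (i) the diagonal entry of AM_n satisfies |(AM_n)_{J,J}| = ∏_{k=1}^{t} (|J_k| + 1); (ii) the entry in the last row satisfies |(AM_n)_{[n],J}| = |J_1| + 1 if 1 ∈ J, and = 1 otherwise; (iii) every nonzero entry (AM_n)_{I,J} of column J divides the diagonal entry (AM_n)_{J,J} and is divisible by the last-row entry (AM_n)_{[n],J}. -/

import Mathlib

/-!
Write `AM = A_n M_n` and `BM = B_n M_n`. Since `M_{n+1} = [[M_n, -M_n], [0, M_n]]`, block
multiplication gives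

* `A_{n+1} M_{n+1} = [[AM, 0], [AM, -(AM + BM)]]`,
* `B_{n+1} M_{n+1} = [[AM, 0], [0, -BM]]`

(`AM_succ`, `BM_succ`). Hence a pair `(a, b)` of entries of `AM`, `BM` at position `(I, J)`
evolves, as the element `n + 1` is added to the ground set, by `(a, b) ↦ (a, a)` if it is in
neither set, `(a, 0)` if it is only in `I`, `(0, 0)` if it is only in `J`, and `-(a + b, b)` if
it is in both. A run of length `r` of `J` traversed inside `I` therefore turns `(c, c)` into
`±((r + 1) c, c)` and `(c, 0)` into `±(c, 0)`: the run contributes the factor `r + 1` to `a` or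
contributes nothing. On the diagonal every run contributes (`diag_entries`). In the last row
`b` becomes and stays `0` at the first element missing from `J`, so only a run starting at `1`
contributes (`lastrow_entries`). In general a nonzero entry is, up to sign, the product of the
factors of some of the runs, and a run starting at `1` is always among them because the
initial pair is `(1, 1)` (`entries_form`).

The entries are computed in terms of three recursively defined statistics of `J`, namely
`tailLen`, `closedProd` and `headFactor`. These are identified with the statistics of the runs
of `natSet J` by observing that inserting `n + 1` into a subset of `{1, …, n}` only extends the
run ending at `n` (`runOf_insert_top`, `runsOf_insert_erase`).
-/

open Finset

/-- Restriction of a subset of `Fin (n+1)` to `Fin n` (forgetting the top element). -/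
def resSet {n : ℕ} (I : Finset (Fin (n + 1))) : Finset (Fin n) :=
  Finset.univ.filter (fun j : Fin n => Fin.castSucc j ∈ I)

mutual
  /-- The matrix `A_n`, rows/columns indexed by subsets of `{1,…,n}` (element `j`
  of `[n]` corresponds to `j-1 : Fin n`, i.e. anti-lexicographic/binary order). -/
  def Amat : (n : ℕ) → Matrix (Finset (Fin n)) (Finset (Fin n)) ℤ
    | 0 => Matrix.of fun _ _ => 1
    | n + 1 => Matrix.of fun I J =>
        if Fin.last n ∈ I then
          if Fin.last n ∈ J then - Bmat n (resSet I) (resSet J)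
          else Amat n (resSet I) (resSet J)
        else Amat n (resSet I) (resSet J)
  /-- The matrix `B_n`. -/
  def Bmat : (n : ℕ) → Matrix (Finset (Fin n)) (Finset (Fin n)) ℤ
    | 0 => Matrix.of fun _ _ => 1
    | n + 1 => Matrix.of fun I J =>
        if Fin.last n ∈ I then
          if Fin.last n ∈ J then - Bmat n (resSet I) (resSet J)
          else 0
        else Amat n (resSet I) (resSet J)
end

/-- The Walsh-Hadamard matrix `H_n`. -/
def Hmat : (n : ℕ) → Matrix (Finset (Fin n)) (Finset (Fin n)) ℤ
  | 0 => Matrix.of fun _ _ => 1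
  | n + 1 => Matrix.of fun I J =>
      if Fin.last n ∈ I ∧ Fin.last n ∈ J then - Hmat n (resSet I) (resSet J)
      else Hmat n (resSet I) (resSet J)

/-- The Möbius matrix `M_n` of the boolean lattice. -/
def Mobmat (n : ℕ) : Matrix (Finset (Fin n)) (Finset (Fin n)) ℤ :=
  Matrix.of fun I J => if I ⊆ J then (-1) ^ (J \ I).card else 0

/-- The zeta matrix `Z_n` of the boolean lattice. -/
def Zetamat (n : ℕ) : Matrix (Finset (Fin n)) (Finset (Fin n)) ℤ :=
  Matrix.of fun I J => if I ⊆ J then 1 else 0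

/-- The subset of `[n] = {1,…,n}` corresponding to a subset of `Fin n`. -/
def natSet {n : ℕ} (I : Finset (Fin n)) : Finset ℕ := Finset.image (fun j : Fin n => (j : ℕ) + 1) I

/-- The ordinal number of a subset in the anti-lexicographic order. -/
def ordFin {n : ℕ} (I : Finset (Fin n)) : ℕ := ∑ j ∈ I, 2 ^ (j : ℕ)

/-- The run (maximal interval of consecutive integers) of `I` containing `j`
(empty if `j ∉ I`). -/
def runOf (I : Finset ℕ) (j : ℕ) : Finset ℕ :=
  I.filter (fun i => ∀ k ∈ Finset.Icc (min i j) (max i j), k ∈ I)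

/-- The set of runs (maximal intervals of consecutive integers) of `I`. -/
def runsOf (I : Finset ℕ) : Finset (Finset ℕ) := I.image (runOf I)

/-- `P` is a prefix of the interval `R`: it consists of an initial segment of `R`. -/
def IsPrefixOf (P R : Finset ℕ) : Prop :=
  P ⊆ R ∧ ∀ i ∈ R, ∀ j ∈ P, i ≤ j → i ∈ P

/-! ### Subsets of `Fin (n + 1)` split by the top element -/

/-- A subset of `Fin n` viewed as a subset of `Fin (n + 1)` avoiding the top element. -/
def liftSet {n : ℕ} (K : Finset (Fin n)) : Finset (Fin (n + 1)) := K.map Fin.castSuccEmb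

lemma mem_resSet {n : ℕ} (I : Finset (Fin (n + 1))) (j : Fin n) :
    j ∈ resSet I ↔ Fin.castSucc j ∈ I := by
  simp [resSet]

lemma castSucc_mem_liftSet {n : ℕ} (K : Finset (Fin n)) (j : Fin n) :
    Fin.castSucc j ∈ liftSet K ↔ j ∈ K := by
  simp [liftSet]

lemma last_notMem_liftSet {n : ℕ} (K : Finset (Fin n)) : Fin.last n ∉ liftSet K := by
  simp [liftSet]

lemma resSet_liftSet {n : ℕ} (K : Finset (Fin n)) : resSet (liftSet K) = K := by
  ext j
  rw [mem_resSet, castSucc_mem_liftSet]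

lemma resSet_insert_liftSet {n : ℕ} (K : Finset (Fin n)) :
    resSet (insert (Fin.last n) (liftSet K)) = K := by
  ext j
  rw [mem_resSet, Finset.mem_insert, castSucc_mem_liftSet]
  simp [Fin.castSucc_ne_last]

lemma eq_of_resSet {n : ℕ} {I J : Finset (Fin (n + 1))} (h : resSet I = resSet J)
    (hl : Fin.last n ∈ I ↔ Fin.last n ∈ J) : I = J := by
  ext j
  refine Fin.lastCases hl (fun i => ?_) j
  rw [← mem_resSet, ← mem_resSet, h]

lemma sum_split {n : ℕ} (F : Finset (Fin (n + 1)) → ℤ) :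
    ∑ K, F K = ∑ K : Finset (Fin n), F (liftSet K) +
      ∑ K : Finset (Fin n), F (insert (Fin.last n) (liftSet K)) := by
  rw [← Finset.sum_filter_not_add_sum_filter Finset.univ (fun K => Fin.last n ∈ K)]
  congr 1
  · refine Finset.sum_bij' (fun K _ => resSet K) (fun K _ => liftSet K) ?_ ?_ ?_ ?_ ?_
    · simp
    · simp [last_notMem_liftSet]
    · intro K hK
      refine eq_of_resSet (resSet_liftSet _) ?_
      simpa [last_notMem_liftSet] using hK
    · simp [resSet_liftSet]
    · intro K hK
      congr 1
      refine eq_of_resSet (resSet_liftSet _).symm ?_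
      simpa [last_notMem_liftSet] using hK
  · refine Finset.sum_bij' (fun K _ => resSet K)
      (fun K _ => insert (Fin.last n) (liftSet K)) ?_ ?_ ?_ ?_ ?_
    · simp
    · simp
    · intro K hK
      refine eq_of_resSet (resSet_insert_liftSet _) ?_
      simpa using hK
    · simp [resSet_insert_liftSet]
    · intro K hK
      congr 1
      refine eq_of_resSet (resSet_insert_liftSet _).symm ?_
      simpa using hK

lemma card_eq_resSet {n : ℕ} (K : Finset (Fin (n + 1))) :
    K.card = (resSet K).card + if Fin.last n ∈ K then 1 else 0 := by
  split_ifs with h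
  · have : K = insert (Fin.last n) (liftSet (resSet K)) :=
      eq_of_resSet (resSet_insert_liftSet _).symm (by simp [h])
    conv_lhs => rw [this]
    rw [Finset.card_insert_of_notMem (last_notMem_liftSet _), liftSet, Finset.card_map]
  · have : K = liftSet (resSet K) :=
      eq_of_resSet (resSet_liftSet _).symm (by simp [h, last_notMem_liftSet])
    conv_lhs => rw [this]
    rw [liftSet, Finset.card_map, add_zero]

lemma subset_iff_resSet {n : ℕ} (I J : Finset (Fin (n + 1))) :
    I ⊆ J ↔ resSet I ⊆ resSet J ∧ (Fin.last n ∈ I → Fin.last n ∈ J) := by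
  constructor
  · intro h
    refine ⟨fun j hj => ?_, fun hl => h hl⟩
    rw [mem_resSet] at hj ⊢
    exact h hj
  · rintro ⟨h, hl⟩ j
    refine Fin.lastCases hl (fun i => ?_) j
    rw [← mem_resSet, ← mem_resSet]
    exact fun hi => h hi

lemma resSet_sdiff {n : ℕ} (I J : Finset (Fin (n + 1))) :
    resSet (J \ I) = resSet J \ resSet I := by
  ext j
  simp [mem_resSet]

/-! ### Block recursion for the products with the Möbius matrix -/

/-- The blocks of the Möbius matrix: `M_{n+1} = [[M_n, -M_n], [0, M_n]]`. -/
lemma Mobmat_succ {n : ℕ} (I J : Finset (Fin (n + 1))) :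
    Mobmat (n + 1) I J =
      if Fin.last n ∈ J then
        if Fin.last n ∈ I then Mobmat n (resSet I) (resSet J)
        else - Mobmat n (resSet I) (resSet J)
      else if Fin.last n ∈ I then 0 else Mobmat n (resSet I) (resSet J) := by
  simp only [Mobmat, Matrix.of_apply, subset_iff_resSet I J, card_eq_resSet (J \ I),
    resSet_sdiff, Finset.mem_sdiff]
  by_cases hI : Fin.last n ∈ I <;> by_cases hJ : Fin.last n ∈ J <;>
    by_cases h : resSet I ⊆ resSet J <;> simp [hI, hJ, h, pow_succ]

/-- `A_{n+1} M_{n+1} = [[AM, 0], [AM, -(AM + BM)]]`, where `AM = A_n M_n`, `BM = B_n M_n`. -/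
lemma AM_succ {n : ℕ} (I J : Finset (Fin (n + 1))) :
    (Amat (n + 1) * Mobmat (n + 1)) I J =
      if Fin.last n ∈ J then
        if Fin.last n ∈ I then
          -((Amat n * Mobmat n) (resSet I) (resSet J) + (Bmat n * Mobmat n) (resSet I) (resSet J))
        else 0
      else (Amat n * Mobmat n) (resSet I) (resSet J) := by
  simp only [Matrix.mul_apply, sum_split, Mobmat_succ, resSet_liftSet, resSet_insert_liftSet,
    last_notMem_liftSet, Finset.mem_insert_self, if_true, if_false, Amat, Matrix.of_apply]
  by_cases hI : Fin.last n ∈ I <;> by_cases hJ : Fin.last n ∈ J <;>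
    simp [hI, hJ, add_comm]

/-- `B_{n+1} M_{n+1} = [[AM, 0], [0, -BM]]`, where `AM = A_n M_n`, `BM = B_n M_n`. -/
lemma BM_succ {n : ℕ} (I J : Finset (Fin (n + 1))) :
    (Bmat (n + 1) * Mobmat (n + 1)) I J =
      if Fin.last n ∈ J then
        if Fin.last n ∈ I then - (Bmat n * Mobmat n) (resSet I) (resSet J)
        else 0
      else if Fin.last n ∈ I then 0 else (Amat n * Mobmat n) (resSet I) (resSet J) := by
  simp only [Matrix.mul_apply, sum_split, Mobmat_succ, resSet_liftSet, resSet_insert_liftSet,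
    last_notMem_liftSet, Finset.mem_insert_self, if_true, if_false, Bmat, Matrix.of_apply]
  by_cases hI : Fin.last n ∈ I <;> by_cases hJ : Fin.last n ∈ J <;>
    simp [hI, hJ]

lemma AM_zero (I J : Finset (Fin 0)) : (Amat 0 * Mobmat 0) I J = 1 := by
  have hI : I = ∅ := Subsingleton.elim _ _
  have hJ : J = ∅ := Subsingleton.elim _ _
  subst hI hJ
  simp [Matrix.mul_apply, Mobmat, Amat, Finset.univ_unique]

lemma BM_zero (I J : Finset (Fin 0)) : (Bmat 0 * Mobmat 0) I J = 1 := by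
  have hI : I = ∅ := Subsingleton.elim _ _
  have hJ : J = ∅ := Subsingleton.elim _ _
  subst hI hJ
  simp [Matrix.mul_apply, Mobmat, Bmat, Finset.univ_unique]

/-! ### Run statistics of a column index, defined recursively -/

/-- The length of the run of `J` that ends at the top element (`0` if the top element
is not in `J`). -/
def tailLen : (n : ℕ) → Finset (Fin n) → ℕ
  | 0, _ => 0
  | n + 1, J => if Fin.last n ∈ J then tailLen n (resSet J) + 1 else 0

/-- The product of `|R| + 1` over the runs `R` of `J` not containing the top element. -/
def closedProd : (n : ℕ) → Finset (Fin n) → ℕ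
  | 0, _ => 1
  | n + 1, J => if Fin.last n ∈ J then closedProd n (resSet J)
      else closedProd n (resSet J) * (tailLen n (resSet J) + 1)

/-- One plus the length of the run of `J` that starts at the bottom element (`1` if the bottom
element is not in `J`). The condition `tailLen n (resSet J) = n` says that `J` contains all
elements below the top one. -/
def headFactor : (n : ℕ) → Finset (Fin n) → ℕ
  | 0, _ => 1
  | n + 1, J => if Fin.last n ∈ J ∧ tailLen n (resSet J) = n then n + 2
      else headFactor n (resSet J)

lemma tailLen_le (n : ℕ) (J : Finset (Fin n)) : tailLen n J ≤ n := by
  induction n with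
  | zero => simp [tailLen]
  | succ n ih =>
    have := ih (resSet J)
    simp only [tailLen]
    split_ifs <;> omega

lemma full_column (n : ℕ) (J : Finset (Fin n)) (h : tailLen n J = n) :
    closedProd n J = 1 ∧ headFactor n J = n + 1 := by
  induction n with
  | zero => simp [closedProd, headFactor]
  | succ n ih =>
    by_cases hJ : Fin.last n ∈ J
    · simp only [tailLen, hJ, if_true, Nat.add_right_cancel_iff] at h
      simp [closedProd, headFactor, hJ, h, ih _ h]
    · simp [tailLen, hJ] at h

/-! ### Entries in terms of the run statistics -/

lemma diag_entries (n : ℕ) (J : Finset (Fin n)) :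
    ∃ s : ℤ, (s = 1 ∨ s = -1) ∧
      (Amat n * Mobmat n) J J = s * (closedProd n J * (tailLen n J + 1) : ℕ) ∧
      (Bmat n * Mobmat n) J J = s * closedProd n J := by
  induction n with
  | zero => exact ⟨1, Or.inl rfl, by simp [AM_zero, closedProd, tailLen],
      by simp [BM_zero, closedProd]⟩
  | succ n ih =>
    obtain ⟨s, hs, hA, hB⟩ := ih (resSet J)
    by_cases hJ : Fin.last n ∈ J
    · refine ⟨-s, by omega, ?_, ?_⟩
      · simp only [AM_succ, hJ, if_true, hA, hB, closedProd, tailLen]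
        push_cast
        ring
      · simp only [BM_succ, hJ, if_true, hB, closedProd]
        ring
    · exact ⟨s, hs, by simp [AM_succ, hJ, hA, closedProd, tailLen],
        by simp [BM_succ, hJ, hA, closedProd]⟩

lemma resSet_univ (n : ℕ) : resSet (Finset.univ : Finset (Fin (n + 1))) = Finset.univ := by
  ext j
  simp [mem_resSet]

lemma lastrow_entries (n : ℕ) (J : Finset (Fin n)) :
    ∃ s : ℤ, (s = 1 ∨ s = -1) ∧
      (Amat n * Mobmat n) Finset.univ J = s * headFactor n J ∧
      (Bmat n * Mobmat n) Finset.univ J = if tailLen n J = n then s else 0 := by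
  induction n with
  | zero => exact ⟨1, Or.inl rfl, by simp [AM_zero, headFactor], by simp [BM_zero, tailLen]⟩
  | succ n ih =>
    obtain ⟨s, hs, hA, hB⟩ := ih (resSet J)
    by_cases hJ : Fin.last n ∈ J
    · refine ⟨-s, by omega, ?_, ?_⟩
      · by_cases hf : tailLen n (resSet J) = n
        · simp only [AM_succ, resSet_univ, hJ, Finset.mem_univ, if_true, hA, hB, hf,
            (full_column n _ hf).2, headFactor, and_self]
          push_cast
          ring
        · simp [AM_succ, resSet_univ, hJ, hA, hB, hf, headFactor]
      · by_cases hf : tailLen n (resSet J) = n <;>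
          simp [BM_succ, resSet_univ, hJ, hB, hf, tailLen]
    · exact ⟨s, hs, by simp [AM_succ, resSet_univ, hJ, hA, headFactor],
        by simp [BM_succ, hJ, tailLen]⟩

/-- The possible pairs of entries of `A_n M_n` and `B_n M_n` at a position of column `J`: both
vanish, or they are `±(Q, 0)` (the current run does not contribute), or `±(Q (r + 1), Q)` with
`r` the length of the current run (the one ending at the top element); here `Q` divides the
product of the factors of the closed runs, and it is a multiple of the factor of the bottom run
as soon as that run is closed. -/
lemma entries_form (n : ℕ) (I J : Finset (Fin n)) :
    ((Amat n * Mobmat n) I J = 0 ∧ (Bmat n * Mobmat n) I J = 0) ∨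
    ∃ (s : ℤ) (Q : ℕ), (s = 1 ∨ s = -1) ∧ Q ∣ closedProd n J ∧
      (tailLen n J < n → headFactor n J ∣ Q) ∧
      ((tailLen n J < n ∧ (Amat n * Mobmat n) I J = s * Q ∧ (Bmat n * Mobmat n) I J = 0) ∨
       ((Amat n * Mobmat n) I J = s * (Q * (tailLen n J + 1) : ℕ) ∧
        (Bmat n * Mobmat n) I J = s * Q)) := by
  induction n with
  | zero =>
    exact Or.inr ⟨1, 1, Or.inl rfl, one_dvd _, by simp [headFactor],
      Or.inr ⟨by simp [AM_zero, tailLen], by simp [BM_zero]⟩⟩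
  | succ n ih =>
    rw [AM_succ, BM_succ]
    by_cases hJ : Fin.last n ∈ J
    · by_cases hI : Fin.last n ∈ I
      · rcases ih (resSet I) (resSet J) with ⟨hA, hB⟩ | ⟨s, Q, hs, hQ, hf, h⟩
        · left
          simp [hI, hJ, hA, hB]
        · right
          refine ⟨-s, Q, by omega, by simpa [closedProd, hJ] using hQ, ?_, ?_⟩
          · intro hlt
            have hlt' : tailLen n (resSet J) < n := by simpa [tailLen, hJ] using hlt
            simpa [headFactor, hJ, hlt'.ne] using hf hlt'
          · rcases h with ⟨hlt, hA, hB⟩ | ⟨hA, hB⟩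
            · exact Or.inl ⟨by simpa [tailLen, hJ] using hlt, by simp [hI, hJ, hA, hB],
                by simp [hI, hJ, hB]⟩
            · refine Or.inr ⟨?_, by simp [hI, hJ, hB]⟩
              simp only [hI, hJ, hA, hB, if_true, tailLen]
              push_cast
              ring
      · left
        simp [hI, hJ]
    · rcases ih (resSet I) (resSet J) with ⟨hA, hB⟩ | ⟨s, Q, hs, hQ, hf, h⟩
      · left
        simp [hJ, hA]
      · right
        -- the run below the top element is now closed; its factor enters `Q` or not
        obtain ⟨Q', hQ', hf', hA'⟩ : ∃ Q' : ℕ,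
            Q' ∣ closedProd n (resSet J) * (tailLen n (resSet J) + 1) ∧
            headFactor n (resSet J) ∣ Q' ∧
            (Amat n * Mobmat n) (resSet I) (resSet J) = s * Q' := by
          rcases h with ⟨hlt, hA, hB⟩ | ⟨hA, hB⟩
          · exact ⟨Q, hQ.mul_right _, hf hlt, hA⟩
          · refine ⟨_, Nat.mul_dvd_mul_right hQ _, ?_, hA⟩
            rcases (tailLen_le n (resSet J)).lt_or_eq with hlt | heq
            · exact (hf hlt).mul_right _
            · rw [(full_column n _ heq).2, heq]
              exact Nat.dvd_mul_left _ _
        refine ⟨s, Q', hs, by simpa [closedProd, hJ] using hQ',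
          fun _ => by simpa [headFactor, hJ] using hf', ?_⟩
        by_cases hI : Fin.last n ∈ I
        · left
          simp [hI, hJ, hA', tailLen]
        · right
          simp [hI, hJ, hA', tailLen]

/-! ### Runs of finite sets of natural numbers -/

lemma mem_runOf {S : Finset ℕ} {i j : ℕ} :
    i ∈ runOf S j ↔ i ∈ S ∧ ∀ k, min i j ≤ k → k ≤ max i j → k ∈ S := by
  simp only [runOf, Finset.mem_filter, Finset.mem_Icc, and_imp]

lemma mem_runOf_of_le {S : Finset ℕ} {i j : ℕ} (hij : i ≤ j) :
    i ∈ runOf S j ↔ ∀ k, i ≤ k → k ≤ j → k ∈ S := by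
  rw [mem_runOf, min_eq_left hij, max_eq_right hij]
  exact ⟨fun h => h.2, fun h => ⟨h i le_rfl hij, h⟩⟩

lemma self_mem_runOf {S : Finset ℕ} {j : ℕ} (h : j ∈ S) : j ∈ runOf S j := by
  rw [mem_runOf_of_le le_rfl]
  intro k h1 h2
  rwa [le_antisymm h2 h1]

lemma runOf_subset (S : Finset ℕ) (j : ℕ) : runOf S j ⊆ S := Finset.filter_subset _ _

lemma runOf_eq_empty {S : Finset ℕ} {j : ℕ} (h : j ∉ S) : runOf S j = ∅ := by
  refine Finset.eq_empty_of_forall_notMem fun i hi => h ?_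
  exact (mem_runOf.1 hi).2 j (min_le_right _ _) (le_max_right _ _)

lemma runOf_eq_of_mem {S : Finset ℕ} {i j : ℕ} (h : i ∈ runOf S j) : runOf S i = runOf S j := by
  rw [mem_runOf] at h
  ext x
  rw [mem_runOf, mem_runOf]
  refine and_congr_right fun _ => ⟨fun hx k h1 h2 => ?_, fun hx k h1 h2 => ?_⟩
  · by_cases hk : min x i ≤ k ∧ k ≤ max x i
    · exact hx k hk.1 hk.2
    · exact h.2 k (by omega) (by omega)
  · by_cases hk : min x j ≤ k ∧ k ≤ max x j
    · exact hx k hk.1 hk.2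
    · exact h.2 k (by omega) (by omega)

lemma runOf_insert_top {n : ℕ} {S : Finset ℕ} (hS : ∀ x ∈ S, 1 ≤ x ∧ x ≤ n) :
    runOf (insert (n + 1) S) (n + 1) = insert (n + 1) (runOf S n) := by
  ext i
  rw [Finset.mem_insert]
  rcases lt_trichotomy i (n + 1) with hi | rfl | hi
  · rw [mem_runOf_of_le hi.le, mem_runOf_of_le (by omega : i ≤ n)]
    constructor
    · intro h
      refine Or.inr fun k h1 h2 => ?_
      have := h k h1 (by omega)
      rw [Finset.mem_insert] at this
      exact this.resolve_left (by omega)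
    · rintro (h | h) k h1 h2
      · omega
      · rw [Finset.mem_insert]
        by_cases hk : k = n + 1
        · exact Or.inl hk
        · exact Or.inr (h k h1 (by omega))
  · simp [self_mem_runOf]
  · constructor
    · intro h
      have := runOf_subset _ _ h
      rw [Finset.mem_insert] at this
      exact Or.inl (this.resolve_right fun h' => by have := hS _ h'; omega)
    · rintro (h | h)
      · omega
      · have := hS _ (runOf_subset _ _ h)
        omega

/-- Adding `n + 1` does not change a run that does not end at `n`. -/
lemma runOf_insert_of_notMem {n : ℕ} {S : Finset ℕ} (hS : ∀ x ∈ S, 1 ≤ x ∧ x ≤ n)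
    {j : ℕ} (hj : j ∈ S) (hjn : j ∉ runOf S n) :
    runOf (insert (n + 1) S) j = runOf S j := by
  have hjn' := (hS j hj).2
  have hnot : ¬ ∀ k, j ≤ k → k ≤ n → k ∈ S := by rwa [mem_runOf_of_le hjn'] at hjn
  ext i
  rw [mem_runOf, mem_runOf]
  constructor
  · rintro ⟨hi, h⟩
    have hin : i ∈ S := by
      refine (Finset.mem_insert.1 hi).resolve_left fun hi' => hnot fun k h1 h2 => ?_
      exact (Finset.mem_insert.1 (h k (by omega) (by omega))).resolve_left (by omega)
    refine ⟨hin, fun k h1 h2 => ?_⟩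
    have := (hS i hin).2
    exact (Finset.mem_insert.1 (h k h1 h2)).resolve_left (by omega)
  · rintro ⟨hi, h⟩
    exact ⟨Finset.mem_insert_of_mem hi, fun k h1 h2 => Finset.mem_insert_of_mem (h k h1 h2)⟩

/-- Adding `n + 1` changes only the run ending at `n`. -/
lemma runsOf_insert_erase {n : ℕ} {S : Finset ℕ} (hS : ∀ x ∈ S, 1 ≤ x ∧ x ≤ n) :
    (runsOf (insert (n + 1) S)).erase (runOf (insert (n + 1) S) (n + 1)) =
      (runsOf S).erase (runOf S n) := by
  have htop := runOf_insert_top hS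
  ext R
  simp only [Finset.mem_erase, runsOf, Finset.mem_image]
  constructor
  · rintro ⟨hne, j, hj, rfl⟩
    have hj1 : j ≠ n + 1 := by
      rintro rfl
      exact hne rfl
    have hjS : j ∈ S := (Finset.mem_insert.1 hj).resolve_left hj1
    have hjn : j ∉ runOf S n := fun h =>
      hne (runOf_eq_of_mem (by rw [htop]; exact Finset.mem_insert_of_mem h))
    rw [runOf_insert_of_notMem hS hjS hjn]
    refine ⟨fun h => hjn ?_, j, hjS, rfl⟩
    rw [← h]
    exact self_mem_runOf hjS
  · rintro ⟨hne, j, hj, rfl⟩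
    have hjn : j ∉ runOf S n := fun h => hne (runOf_eq_of_mem h)
    refine ⟨fun h => ?_, j, Finset.mem_insert_of_mem hj, runOf_insert_of_notMem hS hj hjn⟩
    have h1 : n + 1 ∈ runOf S j := by
      rw [h, htop]
      exact Finset.mem_insert_self _ _
    have := hS _ (runOf_subset _ _ h1)
    omega

lemma runOf_Icc_one (n : ℕ) : runOf (Finset.Icc 1 (n + 1)) 1 = Finset.Icc 1 (n + 1) := by
  refine Finset.Subset.antisymm (runOf_subset _ _) fun i hi => ?_
  rw [mem_runOf]
  rw [Finset.mem_Icc] at hi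
  refine ⟨Finset.mem_Icc.2 hi, fun k h1 h2 => Finset.mem_Icc.2 ?_⟩
  omega

/-- The factor of the run ending at `n` splits off; when `n ∉ S` that run is empty and its
factor is `1`. -/
lemma prod_runsOf (S : Finset ℕ) (n : ℕ) :
    ∏ R ∈ runsOf S, (R.card + 1) =
      (∏ R ∈ (runsOf S).erase (runOf S n), (R.card + 1)) * ((runOf S n).card + 1) := by
  by_cases h : n ∈ S
  · exact (Finset.prod_erase_mul _ _ (Finset.mem_image_of_mem _ h)).symm
  · rw [runOf_eq_empty h, Finset.erase_eq_of_notMem]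
    · simp
    · intro h'
      obtain ⟨j, hj, hj'⟩ := Finset.mem_image.1 h'
      have := self_mem_runOf hj
      simp [hj'] at this

/-! ### The recursive statistics are the run statistics -/

lemma natSet_bounds {n : ℕ} (J : Finset (Fin n)) : ∀ x ∈ natSet J, 1 ≤ x ∧ x ≤ n := by
  intro x hx
  obtain ⟨j, -, rfl⟩ := Finset.mem_image.1 hx
  have := j.isLt
  omega

lemma natSet_succ {n : ℕ} (J : Finset (Fin (n + 1))) :
    natSet J = if Fin.last n ∈ J then insert (n + 1) (natSet (resSet J))
      else natSet (resSet J) := by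
  have key : ∀ x, x ∈ natSet J ↔
      (x = n + 1 ∧ Fin.last n ∈ J) ∨ x ∈ natSet (resSet J) := by
    intro x
    simp only [natSet, Finset.mem_image, mem_resSet]
    constructor
    · rintro ⟨j, hj, rfl⟩
      induction j using Fin.lastCases with
      | last => exact Or.inl ⟨by simp, hj⟩
      | cast i => exact Or.inr ⟨i, hj, by simp⟩
    · rintro (⟨rfl, h⟩ | ⟨i, hi, rfl⟩)
      · exact ⟨_, h, by simp⟩
      · exact ⟨_, hi, by simp⟩
  ext x
  rw [key]
  split_ifs with h <;> simp [h]

lemma tailLen_eq (n : ℕ) (J : Finset (Fin n)) : tailLen n J = (runOf (natSet J) n).card := by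
  induction n with
  | zero =>
    rw [runOf_eq_empty (fun h => by have := natSet_bounds J _ h; omega)]
    simp [tailLen]
  | succ n ih =>
    have hb := natSet_bounds (resSet J)
    rw [natSet_succ]
    by_cases hJ : Fin.last n ∈ J
    · simp only [tailLen, hJ, if_true, runOf_insert_top hb]
      rw [Finset.card_insert_of_notMem, ih]
      intro h
      have := hb _ (runOf_subset _ _ h)
      omega
    · simp only [tailLen, hJ, if_false]
      rw [runOf_eq_empty (fun h => by have := hb _ h; omega)]
      simp

lemma closedProd_eq (n : ℕ) (J : Finset (Fin n)) :
    closedProd n J =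
      ∏ R ∈ (runsOf (natSet J)).erase (runOf (natSet J) n), (R.card + 1) := by
  induction n with
  | zero =>
    have : natSet J = ∅ :=
      Finset.eq_empty_of_forall_notMem fun x h => by have := natSet_bounds J _ h; omega
    simp [closedProd, this, runsOf]
  | succ n ih =>
    have hb := natSet_bounds (resSet J)
    rw [natSet_succ]
    by_cases hJ : Fin.last n ∈ J
    · simp only [closedProd, hJ, if_true, runsOf_insert_erase hb, ih]
    · simp only [closedProd, hJ, if_false]
      rw [ih, tailLen_eq, ← prod_runsOf, prod_runsOf _ (n + 1),
        runOf_eq_empty (fun h => by have := hb _ h; omega)]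
      simp

lemma headFactor_eq (n : ℕ) (J : Finset (Fin n)) :
    headFactor n J = if 1 ∈ natSet J then (runOf (natSet J) 1).card + 1 else 1 := by
  induction n with
  | zero =>
    rw [if_neg (fun h => by have := natSet_bounds J _ h; omega)]
    rfl
  | succ n ih =>
    have hb := natSet_bounds (resSet J)
    have hsub : runOf (natSet (resSet J)) n ⊆ Finset.Icc 1 n := fun x hx =>
      Finset.mem_Icc.2 (hb x (runOf_subset _ _ hx))
    rw [natSet_succ]
    by_cases hJ : Fin.last n ∈ J
    · by_cases hf : tailLen n (resSet J) = n
      · have hrun : runOf (natSet (resSet J)) n = Finset.Icc 1 n := by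
          refine Finset.eq_of_subset_of_card_le hsub ?_
          rw [← tailLen_eq, hf]
          simp
        have hins : insert (n + 1) (natSet (resSet J)) = Finset.Icc 1 (n + 1) := by
          ext x
          rw [Finset.mem_insert, Finset.mem_Icc]
          constructor
          · rintro (rfl | h)
            · omega
            · have := hb x h
              omega
          · intro h
            by_cases hx : x = n + 1
            · exact Or.inl hx
            · refine Or.inr (runOf_subset _ n ?_)
              rw [hrun, Finset.mem_Icc]
              omega
        simp only [headFactor, hJ, hf, and_self, if_true, hins, runOf_Icc_one]
        simp
      · have hlt := lt_of_le_of_ne (tailLen_le n (resSet J)) hf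
        simp only [headFactor, hJ, hf, and_false, if_true, if_false, ih]
        have h1 : 1 ∈ insert (n + 1) (natSet (resSet J)) ↔ 1 ∈ natSet (resSet J) := by
          rw [Finset.mem_insert]
          exact or_iff_right (by omega)
        by_cases hm : 1 ∈ natSet (resSet J)
        · rw [if_pos hm, if_pos (h1.2 hm), runOf_insert_of_notMem hb hm]
          -- if `1` lay in the run ending at `n`, that run would have `n` elements
          intro hmem
          have hsup : Finset.Icc 1 n ⊆ runOf (natSet (resSet J)) n := by
            intro i hi
            rw [Finset.mem_Icc] at hi
            rw [mem_runOf_of_le hi.2]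
            rw [mem_runOf_of_le (by omega)] at hmem
            exact fun k hk1 hk2 => hmem k (by omega) hk2
          have := Finset.card_le_card hsup
          rw [← tailLen_eq, Nat.card_Icc] at this
          omega
        · rw [if_neg hm, if_neg (fun h => hm (h1.1 h))]
    · simp only [headFactor, hJ, false_and, if_false, ih]

/-! ### Conclusion -/

/-- Diagonal and last row of `AM_n = A_n · M_n`:
`|(AM_n)_{J,J}| = ∏_k (|J_k|+1)` over the runs `J_k` of `J`;
`|(AM_n)_{[n],J}| = |J_1|+1` if `1 ∈ J` and `= 1` otherwise; and every nonzero entry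
of column `J` divides the diagonal entry and is divisible by the last-row entry. -/
theorem AM_diag_lastrow (n : ℕ) (J : Finset (Fin n)) :
    ((Amat n * Mobmat n) J J).natAbs = (∏ R ∈ runsOf (natSet J), (R.card + 1)) ∧
    ((Amat n * Mobmat n) Finset.univ J).natAbs =
      (if 1 ∈ natSet J then (runOf (natSet J) 1).card + 1 else 1) ∧
    (∀ I : Finset (Fin n), (Amat n * Mobmat n) I J ≠ 0 →
      (Amat n * Mobmat n) I J ∣ (Amat n * Mobmat n) J J ∧
      (Amat n * Mobmat n) Finset.univ J ∣ (Amat n * Mobmat n) I J) := by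
  obtain ⟨s, hs, hD, -⟩ := diag_entries n J
  obtain ⟨t, ht, hL, -⟩ := lastrow_entries n J
  have habs : ∀ u : ℤ, (u = 1 ∨ u = -1) → ∀ m : ℕ, (u * m).natAbs = m := by
    rintro u (rfl | rfl) m <;> simp
  have hdvd : ∀ u v : ℤ, (u = 1 ∨ u = -1) → (v = 1 ∨ v = -1) → ∀ a b : ℕ, a ∣ b →
      u * (a : ℤ) ∣ v * (b : ℤ) := by
    intro u v hu hv a b hab
    rw [← Int.natAbs_dvd_natAbs, habs u hu, habs v hv]
    exact hab
  refine ⟨?_, ?_, fun I hI => ?_⟩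
  · rw [hD, habs s hs, prod_runsOf _ n, closedProd_eq, tailLen_eq]
  · rw [hL, habs t ht, headFactor_eq]
  · rcases entries_form n I J with ⟨h0, -⟩ | ⟨u, Q, hu, hQ, hf, ⟨hlt, hA, -⟩ | ⟨hA, -⟩⟩
    · exact absurd h0 hI
    · rw [hA, hD, hL]
      exact ⟨hdvd _ _ hu hs _ _ (hQ.mul_right _), hdvd _ _ ht hu _ _ (hf hlt)⟩
    · rw [hA, hD, hL]
      refine ⟨hdvd _ _ hu hs _ _ (Nat.mul_dvd_mul_right hQ _), hdvd _ _ ht hu _ _ ?_⟩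
      rcases (tailLen_le n J).lt_or_eq with hlt | heq
      · exact (hf hlt).mul_right _
      · rw [(full_column n J heq).2, heq]
        exact Nat.dvd_mul_left _ _
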